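/- If X is a standard normal random variable and a ≠ 0, then the variance of Snake_a(X) = X + sin²(aX)/a equals 1 + (1 + e^{-8a²} - 2e^{-4a²})/(8a²). -/

import Mathlib

open MeasureTheory ProbabilityTheory

/-!
Since `sin² (a x) = (1 - cos (2 a x)) / 2`, the snake function is `x - cos (2 a x) / (2 a)` up to
an additive constant. The first term is odd and the second is even, so under a symmetric law they
are uncorrelated and the variance splits. The variance of the cosine only involves the means of
`cos (2 a X)` and `cos (4 a X)`, which are values of the real part of the characteristic function.
-/

section Symmetric

variable {G : Type*} [MeasurableSpace G] [AddGroup G] [MeasurableNeg G] {μ : Measure G}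
  [μ.IsNegInvariant]

lemma integral_eq_zero_of_odd {E : Type*} [NormedAddCommGroup E] [NormedSpace ℝ E] {f : G → E}
    (hf : f.Odd) : ∫ x, f x ∂μ = 0 := by
  have : IsAddTorsionFree E := .of_isTorsionFree ℝ E
  rw [← self_eq_neg, ← integral_neg, ← integral_neg_eq_self]
  exact integral_congr_ae (.of_forall hf)

lemma covariance_eq_zero_of_odd_of_even {f g : G → ℝ} (hf : f.Odd) (hg : g.Even) :
    cov[f, g; μ] = 0 := by
  rw [covariance, integral_eq_zero_of_odd hf]
  refine integral_eq_zero_of_odd fun x ↦ ?_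
  rw [hf x, hg x]
  ring

end Symmetric

section Cosine

variable {Ω : Type*} [MeasurableSpace Ω] {P : Measure Ω} {X : Ω → ℝ}

lemma memLp_cos [IsFiniteMeasure P] (hX : AEMeasurable X P) (p : ENNReal) :
    MemLp (fun ω ↦ Real.cos (X ω)) p P :=
  .of_bound (Real.measurable_cos.comp_aemeasurable hX).aestronglyMeasurable 1
    (.of_forall fun ω ↦ Real.abs_cos_le_one (X ω))

lemma variance_cos [IsProbabilityMeasure P] (hX : AEMeasurable X P) :
    Var[fun ω ↦ Real.cos (X ω); P]
      = (1 + ∫ ω, Real.cos (2 * X ω) ∂P) / 2 - (∫ ω, Real.cos (X ω) ∂P) ^ 2 := by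
  have hcos : Integrable (fun ω ↦ Real.cos (2 * X ω)) P :=
    (memLp_cos (hX.const_mul 2) 1).integrable le_rfl
  have hsq : ∫ ω, Real.cos (X ω) ^ 2 ∂P = (1 + ∫ ω, Real.cos (2 * X ω) ∂P) / 2 := by
    calc ∫ ω, Real.cos (X ω) ^ 2 ∂P
        = ∫ ω, (1 + Real.cos (2 * X ω)) / 2 ∂P := by
          congr with ω
          rw [Real.cos_two_mul]
          ring
      _ = (1 + ∫ ω, Real.cos (2 * X ω) ∂P) / 2 := by
          rw [integral_div, integral_add (integrable_const 1) hcos, integral_const,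
            probReal_univ, one_smul]
  rw [variance_eq_sub (memLp_cos hX 2), ← hsq]
  rfl

end Cosine

lemma integral_cos_mul_eq_re_charFun (μ : Measure ℝ) [IsFiniteMeasure μ] (t : ℝ) :
    ∫ x, Real.cos (t * x) ∂μ = (charFun μ t).re := by
  have hexp : Integrable (fun x : ℝ ↦ Complex.exp (t * x * Complex.I)) μ := by
    refine .of_bound (by fun_prop) 1 (.of_forall fun x ↦ ?_)
    rw [← Complex.ofReal_mul, Complex.norm_exp_ofReal_mul_I]
  rw [charFun_apply_real, ← RCLike.re_eq_complex_re, ← integral_re hexp]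
  congr with x
  rw [RCLike.re_eq_complex_re, ← Complex.ofReal_mul, Complex.exp_ofReal_mul_I_re]

lemma integral_cos_mul_gaussianReal (m : ℝ) (v : NNReal) (t : ℝ) :
    ∫ x, Real.cos (t * x) ∂gaussianReal m v = Real.exp (-(v * t ^ 2 / 2)) * Real.cos (t * m) := by
  have hexponent : (t * m * Complex.I - v * t ^ 2 / 2 : ℂ)
      = (-(v * t ^ 2 / 2) : ℝ) + (t * m : ℝ) * Complex.I := by
    push_cast
    ring
  rw [integral_cos_mul_eq_re_charFun, charFun_gaussianReal, hexponent, Complex.exp_add,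
    ← Complex.ofReal_exp, Complex.re_ofReal_mul, Complex.exp_ofReal_mul_I_re]

instance isNegInvariant_gaussianReal_zero (v : NNReal) : (gaussianReal 0 v).IsNegInvariant :=
  ⟨gaussianReal_map_neg.trans (by rw [neg_zero])⟩

lemma variance_cos_mul_gaussianReal_zero (v : NNReal) (t : ℝ) :
    Var[fun x ↦ Real.cos (t * x); gaussianReal 0 v]
      = (1 + Real.exp (-(2 * v * t ^ 2))) / 2 - Real.exp (-(v * t ^ 2)) := by
  rw [variance_cos (by fun_prop)]
  simp only [← mul_assoc, integral_cos_mul_gaussianReal, mul_zero, Real.cos_zero, mul_one,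
    ← Real.exp_nat_mul]
  ring_nf

lemma snake_eq_sub_cos_add_const (a x : ℝ) :
    x + Real.sin (a * x) ^ 2 / a = x - Real.cos (2 * a * x) / (2 * a) + 1 / (2 * a) := by
  rw [mul_assoc 2 a x, Real.cos_two_mul, Real.cos_sq']
  ring

lemma variance_snake_of_isNegInvariant {μ : Measure ℝ} [IsProbabilityMeasure μ]
    [μ.IsNegInvariant] (hμ : MemLp (fun x ↦ x) 2 μ) (a : ℝ) :
    Var[fun x ↦ x + Real.sin (a * x) ^ 2 / a; μ]
      = Var[fun x ↦ x; μ] + Var[fun x ↦ Real.cos (2 * a * x); μ] / (4 * a ^ 2) := by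
  have hcos : MemLp (fun x ↦ Real.cos (2 * a * x) / (2 * a)) 2 μ := by
    simpa only [div_eq_mul_inv] using (memLp_cos (by fun_prop) 2).mul_const (2 * a)⁻¹
  have hcov : cov[fun x ↦ x, fun x ↦ Real.cos (2 * a * x) / (2 * a); μ] = 0 :=
    covariance_eq_zero_of_odd_of_even (fun _ ↦ rfl) fun x ↦ by rw [mul_neg, Real.cos_neg]
  have hvar : Var[fun x ↦ Real.cos (2 * a * x) / (2 * a); μ]
      = Var[fun x ↦ Real.cos (2 * a * x); μ] / (4 * a ^ 2) := by
    simp only [div_eq_mul_inv, variance_mul_const]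
    ring
  simp only [snake_eq_sub_cos_add_const]
  rw [variance_add_const (by fun_prop), variance_fun_sub hμ hcos, hcov, hvar, mul_zero, sub_zero]

theorem variance_snake_gaussian_general (a : ℝ) (ha : a ≠ 0) (v : NNReal) :
    Var[fun x ↦ x + Real.sin (a * x) ^ 2 / a; gaussianReal 0 v]
      = v + (1 + Real.exp (-8 * a ^ 2 * v) - 2 * Real.exp (-4 * a ^ 2 * v)) / (8 * a ^ 2) := by
  rw [variance_snake_of_isNegInvariant (memLp_id_gaussianReal 2), variance_fun_id_gaussianReal,
    variance_cos_mul_gaussianReal_zero]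
  field_simp
  ring_nf

/-- For a standard normal `X` and `a ≠ 0`, the variance of
`Snake_a(X) = X + sin²(aX)/a` is `1 + (1 + e^{-8a²} - 2e^{-4a²})/(8a²)`. -/
theorem variance_snake_gaussian (a : ℝ) (ha : a ≠ 0) :
    variance (fun x => x + Real.sin (a * x) ^ 2 / a) (gaussianReal 0 1)
      = 1 + (1 + Real.exp (-8 * a ^ 2) - 2 * Real.exp (-4 * a ^ 2)) / (8 * a ^ 2) := by
  simpa only [NNReal.coe_one, mul_one] using variance_snake_gaussian_general a ha 1
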